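/- arXiv:2401.04660 — 2 statements merged into one kernel-verified Lean document; each statement's English description precedes it below -/
import Mathlib

section
/- Let A ∈ ℝ^{n×n}, B ∈ ℝ^{n×r} with rank(B) = r, C ∈ ℝ^{p×n}, and H ∈ ℝ^{n×p} with H C B = B and rank(H) = r. Then for every s ∈ ℂ: the rank over ℂ of the block matrix [[s I_n − A, −B], [C, 0]] equals n + r if and only if the rank over ℂ of the stacked matrix [s I_n − (I − H C) A; C] equals n. In particular, [[s I_n − A, −B],[C, 0]] has rank n + r for all s with Re(s) ≥ 0 if and only if the pair ((I − H C) A, C) is detectable. -/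
open Matrix

/-- PBH detectability of a pair `(M, C)` of real matrices. -/
def Detectable {n p : ℕ} (M : Matrix (Fin n) (Fin n) ℝ)
    (C : Matrix (Fin p) (Fin n) ℝ) : Prop :=
  ∀ s : ℂ, 0 ≤ s.re →
    (Matrix.fromRows (s • (1 : Matrix (Fin n) (Fin n) ℂ) - M.map Complex.ofReal)
      (C.map Complex.ofReal)).rank = n

/-! Let `Z` be an inner inverse of `B`, that is `B Z B = B`. A column operation, followed by the
splitting of the column space along the projection `B Z`, gives
`rank [[M, B], [C, 0]] = rank [(1 - B Z) M; C] + rank B`. Since `H C B = B` and `rank H ≤ rank B`,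
`H` factors as `B Y`, so `Y C` is an inner inverse of `B`. For `M = s I - A`, adding `-s H` times
the block row `C` to `s I - (1 - H C) A` gives `(1 - H C) M`. Hence the ranks of the system pencil
and of the PBH matrix differ by `rank B` for every `s`. -/

section Range

variable {m n k R : Type*} [Fintype n] [Fintype k]

theorem range_mulVecLin_le_range_iff_exists_eq_mul [CommSemiring R] {M : Matrix m n R}
    {N : Matrix m k R} :
    LinearMap.range M.mulVecLin ≤ LinearMap.range N.mulVecLin ↔
      ∃ X : Matrix k n R, M = N * X := by
  classical
  refine ⟨fun h => ?_, ?_⟩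
  · have hcol (j : n) : ∃ v, N *ᵥ v = M.col j := h ⟨Pi.single j 1, by simp⟩
    choose v hv using hcol
    exact ⟨(Matrix.of v)ᵀ, Matrix.ext fun i j => (congrFun (hv j) i).symm⟩
  · rintro ⟨X, rfl⟩
    rw [mulVecLin_mul]
    exact LinearMap.range_comp_le_range _ _

theorem range_mulVecLin_fromCols [CommSemiring R] (M : Matrix m n R) (N : Matrix m k R) :
    LinearMap.range (fromCols M N).mulVecLin =
      LinearMap.range M.mulVecLin ⊔ LinearMap.range N.mulVecLin := by
  have hcol : Set.range (fromCols M N).col = Set.range M.col ∪ Set.range N.col := by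
    rw [← Set.Sum.elim_range]
    exact congrArg Set.range (funext (by rintro (j | j) <;> rfl))
  rw [range_mulVecLin, range_mulVecLin, range_mulVecLin, hcol, Submodule.span_union]

theorem exists_eq_mul_of_mul_eq_of_rank_le [Field R] {M : Matrix m n R} {N : Matrix m k R}
    {X : Matrix k n R} (hX : N * X = M) (hrank : N.rank ≤ M.rank) :
    ∃ Y : Matrix n k R, N = M * Y :=
  have hle : LinearMap.range M.mulVecLin ≤ LinearMap.range N.mulVecLin :=
    range_mulVecLin_le_range_iff_exists_eq_mul.2 ⟨X, hX.symm⟩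
  range_mulVecLin_le_range_iff_exists_eq_mul.1 (Submodule.eq_of_le_of_finrank_le hle hrank).ge

end Range

section BaseChange

variable {m n : Type*} [Fintype n]

theorem rank_eq_card_of_linearIndependent_col {R : Type*} [CommRing R] [Nontrivial R]
    {M : Matrix m n R} (h : LinearIndependent R M.col) : M.rank = Fintype.card n := by
  rw [rank_eq_finrank_span_cols, finrank_span_eq_card h]

theorem rank_map_algebraMap [Finite m] {K : Type*} (L : Type*) [Field K] [Field L] [Algebra K L]
    (M : Matrix m n K) : (M.map (algebraMap K L)).rank = M.rank := by
  obtain ⟨κ, a, ha, hspan, hli⟩ := exists_linearIndependent' K M.col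
  have : Finite κ := Finite.of_injective a ha
  cases nonempty_fintype κ
  let N : Matrix m κ K := M.submatrix id a
  have hrange : LinearMap.range N.mulVecLin = LinearMap.range M.mulVecLin := by
    rw [range_mulVecLin, range_mulVecLin]
    exact hspan
  obtain ⟨X, hX⟩ := range_mulVecLin_le_range_iff_exists_eq_mul.1 hrange.ge
  have hli_map : LinearIndependent L (N.map (algebraMap K L)).col :=
    linearIndependent_algebraMap_comp_iff.2 hli
  have hle : (M.map (algebraMap K L)).rank ≤ (N.map (algebraMap K L)).rank := by
    rw [hX, Matrix.map_mul]
    exact rank_mul_le_left _ _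
  have hge : (N.map (algebraMap K L)).rank ≤ (M.map (algebraMap K L)).rank := by
    rw [← submatrix_map]
    exact rank_submatrix_le _ id a
  calc
    (M.map (algebraMap K L)).rank = (N.map (algebraMap K L)).rank := hle.antisymm hge
    _ = Fintype.card κ := rank_eq_card_of_linearIndependent_col hli_map
    _ = N.rank := (rank_eq_card_of_linearIndependent_col hli).symm
    _ = M.rank := by rw [rank, rank, hrange]

end BaseChange

section Blocks

variable {m n p r R F : Type*}

theorem rank_neg [Fintype n] [CommRing R] (M : Matrix m n R) : (-M).rank = M.rank := by
  rw [← neg_one_smul R M, rank_smul_of_mem_nonZeroDivisors M isUnit_one.neg.mem_nonZeroDivisors]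

theorem rank_fromRows_zero [Finite m] [Finite p] [Fintype n] [CommSemiring R]
    [StrongRankCondition R] (M : Matrix m n R) :
    (fromRows M (0 : Matrix p n R)).rank = M.rank := by
  classical
  cases nonempty_fintype m
  cases nonempty_fintype p
  have hle : (fromRows (1 : Matrix m m R) (0 : Matrix p m R) * M).rank ≤ M.rank :=
    rank_mul_le_right _ _
  have hge := rank_mul_le_right (fromCols (1 : Matrix m m R) (0 : Matrix m p R))
    (fromRows M (0 : Matrix p n R))
  rw [fromRows_mul, Matrix.one_mul, Matrix.zero_mul] at hle
  rw [fromCols_mul_fromRows, Matrix.one_mul, Matrix.zero_mul, add_zero] at hge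
  exact hle.antisymm hge

theorem rank_fromRows_add_mul [Finite m] [Fintype p] [Fintype n] [CommRing R]
    (M : Matrix m n R) (N : Matrix p n R) (X : Matrix m p R) :
    (fromRows (M + X * N) N).rank = (fromRows M N).rank := by
  classical
  cases nonempty_fintype m
  have hop : fromRows (M + X * N) N =
      (fromBlocks 1 X 0 1 : Matrix (m ⊕ p) (m ⊕ p) R) * fromRows M N := by
    simp [fromBlocks_mul_fromRows]
  rw [hop, rank_mul_eq_right_of_isUnit_det _ _ (by simp)]

theorem rank_fromCols_add_mul [Fintype n] [Fintype r] [CommRing R] (M : Matrix m n R)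
    (N : Matrix m r R) (X : Matrix r n R) :
    (fromCols (M + N * X) N).rank = (fromCols M N).rank := by
  classical
  have hop : fromCols (M + N * X) N =
      fromCols M N * (fromBlocks 1 0 X 1 : Matrix (n ⊕ r) (n ⊕ r) R) := by
    simp [fromCols_mul_fromBlocks]
  rw [hop, rank_mul_eq_left_of_isUnit_det _ _ (by simp)]

theorem disjoint_range_mulVecLin_of_mul_eq_zero_of_mul_eq_self [Fintype m] [Fintype n] [Fintype r]
    [CommSemiring R] {M : Matrix m n R} {N : Matrix m r R} (W : Matrix m m R) (hM : W * M = 0)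
    (hN : W * N = N) :
    Disjoint (LinearMap.range M.mulVecLin) (LinearMap.range N.mulVecLin) := by
  rw [Submodule.disjoint_def]
  rintro _ ⟨x, rfl⟩ ⟨u, hu : N *ᵥ u = M *ᵥ x⟩
  calc
    M *ᵥ x = N *ᵥ u := hu.symm
    _ = W *ᵥ N *ᵥ u := by rw [mulVec_mulVec, hN]
    _ = W *ᵥ M *ᵥ x := by rw [hu]
    _ = 0 := by rw [mulVec_mulVec, hM, zero_mulVec]

variable [Field F]

theorem rank_fromCols_of_disjoint [Fintype n] [Fintype r] {M : Matrix m n F} {N : Matrix m r F}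
    (h : Disjoint (LinearMap.range M.mulVecLin) (LinearMap.range N.mulVecLin)) :
    (fromCols M N).rank = M.rank + N.rank := by
  have hdim := Submodule.finrank_sup_add_finrank_inf_eq (LinearMap.range M.mulVecLin)
    (LinearMap.range N.mulVecLin)
  rwa [h.eq_bot, finrank_bot, add_zero, ← range_mulVecLin_fromCols] at hdim

theorem rank_fromBlocks_zero₂₂_of_mul_mul_eq_self [Fintype m] [Fintype n] [Finite p] [Fintype r]
    [DecidableEq m] (M : Matrix m n F) {B : Matrix m r F} (C : Matrix p n F) {Z : Matrix r m F}
    (hZ : B * Z * B = B) :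
    (fromBlocks M B C 0).rank = (fromRows ((1 - B * Z) * M) C).rank + B.rank := by
  cases nonempty_fintype p
  have hsub : (1 - B * Z) * M = M + B * -(Z * M) := by
    rw [Matrix.sub_mul, Matrix.one_mul, Matrix.mul_neg, Matrix.mul_assoc, sub_eq_add_neg]
  have hop : fromRows ((1 - B * Z) * M) C =
      fromRows M C + fromRows B (0 : Matrix p r F) * -(Z * M) := by
    ext (i | i) j <;> simp [hsub, fromRows_mul]
  have hidem : B * Z * (1 - B * Z) = 0 := by
    rw [Matrix.mul_sub, Matrix.mul_one, ← Matrix.mul_assoc, hZ, sub_self]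
  have hdisj : Disjoint (LinearMap.range (fromRows ((1 - B * Z) * M) C).mulVecLin)
      (LinearMap.range (fromRows B (0 : Matrix p r F)).mulVecLin) :=
    disjoint_range_mulVecLin_of_mul_eq_zero_of_mul_eq_self (fromBlocks (B * Z) 0 0 0)
      (by simp [fromBlocks_mul_fromRows, ← Matrix.mul_assoc, hidem])
      (by simp [fromBlocks_mul_fromRows, hZ])
  calc
    (fromBlocks M B C 0).rank
        = (fromCols (fromRows ((1 - B * Z) * M) C) (fromRows B (0 : Matrix p r F))).rank := by
      rw [← fromCols_fromRows_eq_fromBlocks, hop, rank_fromCols_add_mul]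
    _ = (fromRows ((1 - B * Z) * M) C).rank + (fromRows B (0 : Matrix p r F)).rank :=
      rank_fromCols_of_disjoint hdisj
    _ = (fromRows ((1 - B * Z) * M) C).rank + B.rank := by rw [rank_fromRows_zero]

theorem rank_fromBlocks_smul_one_sub_eq_rank_fromRows_add_rank [Fintype n] [Fintype p] [Fintype r]
    [DecidableEq n] (A : Matrix n n F) {B : Matrix n r F} {C : Matrix p n F} {H : Matrix n p F}
    (hH : H * C * B = B) (hrank : H.rank ≤ B.rank) (s : F) :
    (fromBlocks (s • (1 : Matrix n n F) - A) (-B) C 0).rank =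
      (fromRows (s • (1 : Matrix n n F) - (1 - H * C) * A) C).rank + B.rank := by
  obtain ⟨Y, hY⟩ := exists_eq_mul_of_mul_eq_of_rank_le
    ((Matrix.mul_assoc H C B).symm.trans hH) hrank
  have hproj : -B * -(Y * C) = H * C := by
    rw [Matrix.neg_mul, Matrix.mul_neg, neg_neg, ← Matrix.mul_assoc, ← hY]
  have hrow : (1 - H * C) * (s • (1 : Matrix n n F) - A) =
      s • (1 : Matrix n n F) - (1 - H * C) * A + -(s • H) * C := by
    rw [Matrix.mul_sub, Matrix.mul_smul, Matrix.mul_one, smul_sub, Matrix.neg_mul,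
      Matrix.smul_mul]
    abel
  rw [rank_fromBlocks_zero₂₂_of_mul_mul_eq_self _ C (Z := -(Y * C))
      (by rw [hproj, Matrix.mul_neg, hH]),
    hproj, hrow, rank_fromRows_add_mul, rank_neg]

end Blocks

theorem stmt11_general {n r p K L : Type*} [Fintype n] [Fintype r] [Fintype p] [DecidableEq n]
    [Field K] [Field L] [Algebra K L] (A : Matrix n n K) (B : Matrix n r K) (C : Matrix p n K)
    (H : Matrix n p K) (hH : H * C * B = B) (hrank : H.rank ≤ B.rank) (s : L) :
    (fromBlocks (s • (1 : Matrix n n L) - A.map (algebraMap K L)) (-(B.map (algebraMap K L)))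
        (C.map (algebraMap K L)) 0).rank =
      (fromRows (s • (1 : Matrix n n L) - ((1 - H * C) * A).map (algebraMap K L))
        (C.map (algebraMap K L))).rank + B.rank := by
  have hH_map : H.map (algebraMap K L) * C.map (algebraMap K L) * B.map (algebraMap K L) =
      B.map (algebraMap K L) := by
    rw [← Matrix.map_mul, ← Matrix.map_mul, hH]
  have hrank_map : (H.map (algebraMap K L)).rank ≤ (B.map (algebraMap K L)).rank := by
    rwa [rank_map_algebraMap, rank_map_algebraMap]
  have hmap : ((1 - H * C) * A).map (algebraMap K L) =
      (1 - H.map (algebraMap K L) * C.map (algebraMap K L)) * A.map (algebraMap K L) := by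
    rw [Matrix.map_mul, Matrix.map_sub _ (map_sub _), Matrix.map_mul,
      Matrix.map_one _ (map_zero _) (map_one _)]
  rw [hmap, rank_fromBlocks_smul_one_sub_eq_rank_fromRows_add_rank _ hH_map hrank_map,
    rank_map_algebraMap]

/-- For `H` with `HCB = B` and `rank H = r = rank B`: for every `s ∈ ℂ`,
`rank [[sI − A, −B],[C, 0]] = n + r` iff `rank [sI − (I−HC)A; C] = n`; in
particular the full-rank condition on the closed right half-plane is equivalent to
detectability of `((I−HC)A, C)`. -/
theorem stmt11 {n r p : ℕ}
    (A : Matrix (Fin n) (Fin n) ℝ) (B : Matrix (Fin n) (Fin r) ℝ)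
    (hB : B.rank = r)
    (C : Matrix (Fin p) (Fin n) ℝ) (H : Matrix (Fin n) (Fin p) ℝ)
    (hH : H * C * B = B) (hHrank : H.rank = r) :
    (∀ s : ℂ,
      (Matrix.fromBlocks
          (s • (1 : Matrix (Fin n) (Fin n) ℂ) - A.map Complex.ofReal)
          (-(B.map Complex.ofReal)) (C.map Complex.ofReal) 0).rank = n + r ↔
        (Matrix.fromRows
          (s • (1 : Matrix (Fin n) (Fin n) ℂ) - ((1 - H * C) * A).map Complex.ofReal)
          (C.map Complex.ofReal)).rank = n) ∧
    ((∀ s : ℂ, 0 ≤ s.re →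
      (Matrix.fromBlocks
          (s • (1 : Matrix (Fin n) (Fin n) ℂ) - A.map Complex.ofReal)
          (-(B.map Complex.ofReal)) (C.map Complex.ofReal) 0).rank = n + r) ↔
      Detectable ((1 - H * C) * A) C) := by
  have key (s : ℂ) := (stmt11_general A B C H hH (hHrank.trans hB.symm).le s).congr_left.trans
    (show _ = n + r ↔ _ = n by rw [hB, Nat.add_right_cancel_iff])
  exact ⟨key, forall₂_congr fun s _ => key s⟩
end

section
/- For each i ∈ {1,…,M}, let A ∈ ℝ^{n×n}, B_i^m ∈ ℝ^{n×m_i}, B_i^p ∈ ℝ^{n×r_i} with rank(B_i^p) = r_i, C_i ∈ ℝ^{p_i×n}, and let U_i ∈ ℝ^{m_i×N}, W_i ∈ ℝ^{r_i×N}, X_i ∈ ℝ^{n×N} be data matrices with [U_i; W_i; X_i] of full row rank m_i + r_i + n; define Ẋ_i := A X_i + B_i^m U_i + B_i^p W_i, Y_i := C_i X_i, Ẏ_i := C_i Ẋ_i. Let L ∈ ℝ^{M×M} be symmetric with nonpositive off-diagonal entries, L·𝟏 = 0, and irreducible. Suppose: (a) for every i, rank([U_i; Ẏ_i; X_i]) =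 rank([U_i; X_i; Ẋ_i]); and (b) for i = 1, the rank over ℂ of [s X_1 − Ẋ_1; U_1; Y_1] equals n + m_1 + r_1 for every s ∈ ℂ with Re(s) ≥ 0. Then there exist matrices E_i ∈ ℝ^{n×n}, F_i ∈ ℝ^{n×m_i}, L_i, H_i ∈ ℝ^{n×p_i}, K_i ∈ ℝ^{n×n} such that for every i: F_i = (I − H_i C_i) B_i^m, (I − H_i C_i) B_i^p = 0, E_i = (I − H_i C_i) A − (L_i − E_i H_i) C_i, and moreover blockdiag(E_1,…,E_M) − blockdiag(K_1,…,K_M)·(L ⊗ I_n) is Hurwitz. -/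
open Matrix Kronecker

/-- A matrix is irreducible if for every nonempty proper subset `S` of the index set
there exist `i ∈ S` and `j ∉ S` with `L i j ≠ 0`. -/
def MatIrreducible {M : ℕ} (L : Matrix (Fin M) (Fin M) ℝ) : Prop :=
  ∀ S : Finset (Fin M), S.Nonempty → S ≠ Finset.univ →
    ∃ i ∈ S, ∃ j, j ∉ S ∧ L i j ≠ 0

/-- A real square matrix is Hurwitz if every eigenvalue of its complexification has
negative real part. -/
def IsHurwitz {n : Type*} [Fintype n] [DecidableEq n] (A : Matrix n n ℝ) : Prop :=
  ∀ z ∈ spectrum ℂ (A.map Complex.ofReal), z.re < 0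

/-- Block diagonal matrix with square blocks `E 0, …, E (k-1)`. -/
def bdiag {k n : ℕ} (E : Fin k → Matrix (Fin n) (Fin n) ℝ) :
    Matrix (Fin k × Fin n) (Fin k × Fin n) ℝ :=
  fun p q => if p.1 = q.1 then E p.1 p.2 q.2 else 0

/-!
Full row rank of the data `[U; W; X]` turns rank conditions on measured data into statements about
the system matrices. Condition (a) puts `Xdot` in the row space of `[U; C Xdot; X]`, which forces
`P = T C P` for some `T`; a generalized inverse `J` of `C P` then gives `(1 - P J C) P = 0`, that
is, the decoupling gain `H = P J`. Condition (b) is the absence of invariant zeros in the closed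
right half-plane, so `((1 - H C) A, C)` is detectable at the pinned node and some output injection
makes that node's observer Hurwitz.

The stabilizing injection comes from a theorem of the alternative: by Hahn–Banach on the compact
convex set of positive semidefinite matrices of trace one, either a Lyapunov matrix exists, or some
`X ≥ 0` nonzero has `A X + X Aᵀ ≥ 0` and `C X = 0`. The range of such an `X` is `A`-invariant and
contains an eigenvector of `A`, unseen by `C`, for an eigenvalue with nonnegative real part.

The coupling gain `K` is zero at the pinned node and a large multiple of the identity elsewhere, so
the error dynamics is block triangular. On the other nodes the Laplacian of a connected graph with
one row and column removed is positive definite, and a large multiple of it dominates the local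
dynamics.
-/

open scoped MatrixOrder ComplexOrder

section Factorization

variable {K l m n : Type*} [Field K] [Fintype m] [Fintype n]

theorem exists_mul_mul_eq_self (Z : Matrix m n K) : ∃ J : Matrix n m K, Z * J * Z = Z := by
  classical
  obtain ⟨g, hg⟩ := Z.toLin'.rangeRestrict.exists_rightInverse_of_surjective
    (LinearMap.range_rangeRestrict _)
  obtain ⟨j, hj⟩ := g.exists_extend
  refine ⟨LinearMap.toMatrix' j, toLin'.injective (LinearMap.ext fun x => ?_)⟩
  have hjg : j (Z.toLin' x) = g (Z.toLin'.rangeRestrict x) :=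
    LinearMap.congr_fun hj (Z.toLin'.rangeRestrict x)
  have hZg : Z.toLin' (g (Z.toLin'.rangeRestrict x)) = Z.toLin' x :=
    congrArg Subtype.val (LinearMap.congr_fun hg (Z.toLin'.rangeRestrict x))
  rw [toLin'_mul, toLin'_mul, toLin'_toMatrix']
  simp only [LinearMap.comp_apply, hjg, hZg]

theorem exists_eq_mul_of_mulVec_eq_zero_imp {Z : Matrix m n K} {T : Matrix l n K}
    (h : ∀ x, Z *ᵥ x = 0 → T *ᵥ x = 0) : ∃ Y : Matrix l m K, T = Y * Z := by
  classical
  obtain ⟨J, hJ⟩ := exists_mul_mul_eq_self Z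
  refine ⟨T * J, ext_of_mulVec_single fun j => ?_⟩
  have hker := h (Pi.single j 1 - (J * Z) *ᵥ Pi.single j 1) (by
    rw [mulVec_sub, mulVec_mulVec, ← Matrix.mul_assoc, hJ, sub_self])
  rwa [mulVec_sub, mulVec_mulVec, ← Matrix.mul_assoc, sub_eq_zero] at hker

theorem exists_mul_mul_eq_of_rank_mul_eq [Fintype l] {T : Matrix l m K} {D : Matrix m n K}
    (h : (T * D).rank = D.rank) : ∃ Y : Matrix m l K, D = Y * (T * D) := by
  have hle : LinearMap.ker D.mulVecLin ≤ LinearMap.ker (T * D).mulVecLin := fun x hx => by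
    rw [LinearMap.mem_ker, mulVecLin_apply] at hx ⊢
    rw [← mulVec_mulVec, hx, mulVec_zero]
  have hD := D.mulVecLin.finrank_range_add_finrank_ker
  have hTD := (T * D).mulVecLin.finrank_range_add_finrank_ker
  have heq := Submodule.eq_of_le_of_finrank_eq hle (by unfold rank at h; lia)
  exact exists_eq_mul_of_mulVec_eq_zero_imp fun x hx => heq.ge hx

theorem eq_zero_of_mul_eq_zero_of_rank_eq_card {T : Matrix l m K} {D : Matrix m n K}
    (hD : D.rank = Fintype.card m) (h : T * D = 0) : T = 0 := by
  classical
  have hsurj : LinearMap.range D.mulVecLin = ⊤ :=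
    Submodule.eq_top_of_finrank_eq (by rw [Module.finrank_fintype_fun_eq_card]; exact hD)
  refine ext_of_mulVec_single fun j => ?_
  obtain ⟨x, hx⟩ := LinearMap.range_eq_top.1 hsurj (Pi.single j 1)
  rw [← hx, mulVecLin_apply, mulVec_mulVec, h, zero_mulVec, zero_mulVec]

omit [Fintype m] in
theorem eq_zero_of_mulVec_eq_zero_of_card_le_rank {T : Matrix m n K}
    (hT : Fintype.card n ≤ T.rank) {x : n → K} (hx : T *ᵥ x = 0) : x = 0 := by
  have hdim := T.mulVecLin.finrank_range_add_finrank_ker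
  rw [Module.finrank_fintype_fun_eq_card] at hdim
  have hker := Submodule.finrank_eq_zero.1 (show Module.finrank K (LinearMap.ker T.mulVecLin) = 0 by
    unfold rank at hT; lia)
  exact (Submodule.eq_bot_iff _).1 hker x hx

end Factorization

section Data

variable {K ι μ ρ π τ : Type*} [Field K] [Fintype ι] [Fintype μ] [Fintype ρ] [Fintype π]
  [Fintype τ] {A : Matrix ι ι K} {B : Matrix ι μ K} {P : Matrix ι ρ K} {C : Matrix π ι K}
  {U : Matrix μ τ K} {W : Matrix ρ τ K} {X X' : Matrix ι τ K}

theorem eq_zero_of_add_mul_add_mul_eq_zero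
    (hfull : (fromRows U (fromRows W X)).rank = Fintype.card μ + Fintype.card ρ + Fintype.card ι)
    {l : Type*} {S : Matrix l μ K} {T : Matrix l ρ K} {R : Matrix l ι K}
    (h : S * U + T * W + R * X = 0) : T = 0 := by
  have hzero : fromCols S (fromCols T R) = 0 := by
    refine eq_zero_of_mul_eq_zero_of_rank_eq_card (D := fromRows U (fromRows W X)) ?_ ?_
    · simpa [add_assoc] using hfull
    · rw [fromCols_mul_fromRows, fromCols_mul_fromRows, ← add_assoc, h]
  ext i j
  exact congrFun (congrFun hzero i) (.inr (.inl j))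

omit [Fintype ρ] in
theorem exists_eq_add_of_rank_eq
    (hrank : (fromRows U (fromRows (C * X') X)).rank = (fromRows U (fromRows X X')).rank) :
    ∃ (S : Matrix ι μ K) (T : Matrix ι π K) (R : Matrix ι ι K),
      X' = S * U + T * (C * X') + R * X := by
  classical
  let Q : Matrix (μ ⊕ π ⊕ ι) (μ ⊕ ι ⊕ ι) K :=
    fromRows (fromCols 1 0) (fromRows (fromCols 0 (fromCols 0 C)) (fromCols 0 (fromCols 1 0)))
  have hQ : Q * fromRows U (fromRows X X') = fromRows U (fromRows (C * X') X) := by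
    simp only [Q, fromRows_mul, fromCols_mul_fromRows, Matrix.one_mul, Matrix.zero_mul, add_zero,
      zero_add]
  obtain ⟨Y, hY⟩ := exists_mul_mul_eq_of_rank_mul_eq (by rw [hQ, hrank])
  rw [hQ] at hY
  refine ⟨Y.toRows₂.toRows₂.toCols₁, Y.toRows₂.toRows₂.toCols₂.toCols₁,
    Y.toRows₂.toRows₂.toCols₂.toCols₂, ?_⟩
  rw [add_assoc, ← fromCols_mul_fromRows, ← fromCols_mul_fromRows, fromCols_toCols, fromCols_toCols]
  exact congrArg (fun Z => Z.toRows₂.toRows₂) hY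

theorem exists_mul_mul_mul_eq_of_rank_eq (hX' : X' = A * X + B * U + P * W)
    (hfull : (fromRows U (fromRows W X)).rank = Fintype.card μ + Fintype.card ρ + Fintype.card ι)
    (hrank : (fromRows U (fromRows (C * X') X)).rank = (fromRows U (fromRows X X')).rank) :
    ∃ J : Matrix ρ π K, P * J * (C * P) = P := by
  classical
  obtain ⟨S, T, R, hspan⟩ := exists_eq_add_of_rank_eq hrank
  have hT : (1 - T * C) * P = 0 := by
    refine eq_zero_of_add_mul_add_mul_eq_zero hfull (S := (1 - T * C) * B - S)
      (R := (1 - T * C) * A - R) ?_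
    have hres : (1 - T * C) * X' - S * U - R * X = 0 := by
      nth_rw 1 [Matrix.sub_mul, Matrix.one_mul, hspan, Matrix.mul_assoc]
      abel
    rw [← hres, hX']
    simp only [Matrix.sub_mul, Matrix.mul_add, Matrix.mul_assoc]
    abel
  have hfactor : P = T * (C * P) := by
    rwa [Matrix.sub_mul, Matrix.one_mul, sub_eq_zero, Matrix.mul_assoc] at hT
  obtain ⟨J, hJ⟩ := exists_mul_mul_eq_self (C * P)
  refine ⟨J, ?_⟩
  calc P * J * (C * P) = T * (C * P * J * (C * P)) := by
        nth_rw 1 [hfactor]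
        simp only [Matrix.mul_assoc]
    _ = P := by rw [hJ, ← hfactor]

omit [Fintype π] in
theorem eq_zero_of_rank_eq_of_mulVec_eq (hX' : X' = A * X + B * U + P * W) {s : K}
    (hrank : (fromRows (s • X - X') (fromRows U (C * X))).rank =
      Fintype.card ι + Fintype.card μ + Fintype.card ρ)
    {v : ι → K} {w : ρ → K} (hv : A *ᵥ v + P *ᵥ w = s • v) (hC : C *ᵥ v = 0) : v = 0 := by
  classical
  let T : Matrix (ι ⊕ μ ⊕ π) (μ ⊕ ρ ⊕ ι) K := fromRows (fromCols (-B) (fromCols (-P) (s • 1 - A)))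
    (fromRows (fromCols 1 0) (fromCols 0 (fromCols 0 C)))
  have hT : T * fromRows U (fromRows W X) = fromRows (s • X - X') (fromRows U (C * X)) := by
    simp only [T, hX', fromRows_mul, fromCols_mul_fromRows, Matrix.sub_mul, Matrix.neg_mul,
      Matrix.smul_mul, Matrix.one_mul, Matrix.zero_mul, add_zero, zero_add]
    congr 1
    abel
  have hTrank : Fintype.card (μ ⊕ ρ ⊕ ι) ≤ T.rank := by
    have := rank_mul_le_left T (fromRows U (fromRows W X))
    rw [hT, hrank] at this
    simp only [Fintype.card_sum]
    lia
  have hker : T *ᵥ Sum.elim 0 (Sum.elim w v) = 0 := by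
    simp only [T, fromRows_mulVec, fromCols_mulVec_sumElim, hC, sub_mulVec, neg_mulVec,
      smul_mulVec, one_mulVec, zero_mulVec, mulVec_zero, ← hv, add_zero, zero_add]
    ext (i | i | i) <;> simp
  exact congrArg (fun x => x ∘ Sum.inr ∘ Sum.inr)
    (eq_zero_of_mulVec_eq_zero_of_card_le_rank hTrank hker)

end Data

section Lyapunov

variable {ι κ l : Type*} [Fintype ι]

theorem map_ofReal_mul (S : Matrix κ ι ℝ) (T : Matrix ι l ℝ) :
    (S * T).map Complex.ofReal = S.map Complex.ofReal * T.map Complex.ofReal :=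
  Matrix.map_mul (f := Complex.ofRealHom)

omit [Fintype ι] in
theorem conjTranspose_map_ofReal (S : Matrix κ ι ℝ) :
    (S.map Complex.ofReal)ᴴ = Sᵀ.map Complex.ofReal := by
  ext; simp

omit [Fintype ι] in
theorem posSemidef_map_ofReal [Finite ι] {P : Matrix ι ι ℝ} (hP : P.PosSemidef) :
    (P.map Complex.ofReal).PosSemidef := by
  have := Fintype.ofFinite ι
  classical
  obtain ⟨B, rfl⟩ := CStarAlgebra.nonneg_iff_eq_star_mul_self.1 hP.nonneg
  rw [map_ofReal_mul, star_eq_conjTranspose, conjTranspose_eq_transpose_of_trivial,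
    ← conjTranspose_map_ofReal]
  exact posSemidef_conjTranspose_mul_self _

omit [Fintype ι] in
theorem posDef_map_ofReal [Finite ι] {P : Matrix ι ι ℝ} (hP : P.PosDef) :
    (P.map Complex.ofReal).PosDef := by
  have := Fintype.ofFinite ι
  classical
  exact (posSemidef_map_ofReal hP.posSemidef).posDef_iff_isUnit.2
    (hP.isUnit.map Complex.ofRealHom.mapMatrix)

theorem re_star_dotProduct_add_conjTranspose_mulVec {M Q : Matrix ι ι ℂ} (hQ : Q.IsHermitian)
    {μ : ℂ} {w : ι → ℂ} (h : M *ᵥ w = μ • Q *ᵥ w) :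
    (star w ⬝ᵥ ((M + Mᴴ) *ᵥ w)).re = 2 * μ.re * (star w ⬝ᵥ (Q *ᵥ w)).re := by
  have hadj : star w ⬝ᵥ (Mᴴ *ᵥ w) = star (star w ⬝ᵥ (M *ᵥ w)) := by
    rw [← star_dotProduct_star, star_star, star_mulVec, ← dotProduct_mulVec, dotProduct_comm]
  have him : (star w ⬝ᵥ (Q *ᵥ w)).im = 0 := hQ.im_star_dotProduct_mulVec_self w
  rw [add_mulVec, dotProduct_add, hadj, h, dotProduct_smul, smul_eq_mul]
  simp only [star_mul', RCLike.star_def, Complex.add_re, Complex.mul_re, him, mul_zero, sub_zero,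
    Complex.conj_re, Complex.conj_im, neg_zero]
  ring

theorem exists_mulVec_eq_smul_of_mem_spectrum [DecidableEq ι] {M : Matrix ι ι ℂ} {z : ℂ}
    (hz : z ∈ spectrum ℂ M) : ∃ w ≠ 0, M *ᵥ w = z • w := by
  rw [← Matrix.spectrum_toLin', ← Module.End.hasEigenvalue_iff_mem_spectrum] at hz
  obtain ⟨w, hw⟩ := hz.exists_hasEigenvector
  exact ⟨w, hw.2, hw.apply_eq_smul⟩

theorem isHurwitz_of_lyapunov [DecidableEq ι] {A P : Matrix ι ι ℝ} (hP : P.PosDef)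
    (hA : (-(P * A + Aᵀ * P)).PosDef) : IsHurwitz A := by
  intro z hz
  obtain ⟨w, hw, hAw⟩ := exists_mulVec_eq_smul_of_mem_spectrum hz
  have hPw := (posDef_map_ofReal hP).re_dotProduct_pos hw
  have hLw := (posDef_map_ofReal hA).re_dotProduct_pos hw
  have hPA : (P * A).map Complex.ofReal *ᵥ w = z • P.map Complex.ofReal *ᵥ w := by
    rw [map_ofReal_mul, ← mulVec_mulVec, hAw, mulVec_smul]
  have hneg : (-(P * A + Aᵀ * P)).map Complex.ofReal =
      -((P * A).map Complex.ofReal + ((P * A).map Complex.ofReal)ᴴ) := by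
    rw [conjTranspose_map_ofReal, transpose_mul, ← conjTranspose_eq_transpose_of_trivial P,
      hP.isHermitian.eq]
    ext; simp
  have hid := re_star_dotProduct_add_conjTranspose_mulVec (posDef_map_ofReal hP).isHermitian hPA
  simp only [hneg, neg_mulVec, dotProduct_neg, RCLike.re_eq_complex_re, Complex.neg_re] at hLw hPw
  nlinarith

theorem exists_mul_eq_mul_of_posSemidef {A X : Matrix ι ι ℂ} (hX : X.PosSemidef)
    (hAX : (A * X + X * Aᴴ).PosSemidef) : ∃ Y : Matrix ι ι ℂ, A * X = X * Y := by
  obtain ⟨Y, hY⟩ : ∃ Y, X * Aᴴ = Y * X := by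
    refine exists_eq_mul_of_mulVec_eq_zero_imp fun x hx => ?_
    have hxX : star x ᵥ* X = 0 := by
      rw [← hX.isHermitian.eq, ← star_mulVec, hx, star_zero]
    have hAXx : (A * X) *ᵥ x = 0 := by rw [← mulVec_mulVec, hx, mulVec_zero]
    have hxAXx : star x ⬝ᵥ ((A * X + X * Aᴴ) *ᵥ x) = 0 := by
      rw [add_mulVec, hAXx, zero_add, ← mulVec_mulVec, dotProduct_mulVec, hxX, zero_dotProduct]
    have hker := (hAX.dotProduct_mulVec_zero_iff x).1 hxAXx
    rwa [add_mulVec, hAXx, zero_add] at hker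
  refine ⟨Yᴴ, conjTranspose_injective ?_⟩
  rw [conjTranspose_mul, conjTranspose_mul, conjTranspose_conjTranspose, hX.isHermitian.eq, hY]

theorem exists_eigenvector_of_mul_eq_mul {A X Y : Matrix ι ι ℂ} (hX : X ≠ 0)
    (h : A * X = X * Y) :
    ∃ (μ : ℂ) (w : ι → ℂ), X *ᵥ w ≠ 0 ∧ A *ᵥ (X *ᵥ w) = μ • X *ᵥ w := by
  classical
  have hinv : ∀ v ∈ LinearMap.range X.mulVecLin, A.mulVecLin v ∈ LinearMap.range X.mulVecLin := by
    rintro _ ⟨w, rfl⟩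
    exact ⟨Y *ᵥ w, by simp only [mulVecLin_apply, mulVec_mulVec, h]⟩
  have : Nontrivial (LinearMap.range X.mulVecLin) := by
    rw [Submodule.nontrivial_iff_ne_bot, Ne, LinearMap.range_eq_bot]
    exact fun h0 => hX (toLin'.injective (h0.trans toLin'.map_zero.symm))
  obtain ⟨μ, hμ⟩ := Module.End.exists_eigenvalue (A.mulVecLin.restrict hinv)
  obtain ⟨⟨_, w, rfl⟩, hw⟩ := hμ.exists_hasEigenvector
  exact ⟨μ, w, fun h0 => hw.2 (Subtype.ext h0), congrArg Subtype.val hw.apply_eq_smul⟩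

theorem exists_eigenvector_of_posSemidef {A X : Matrix ι ι ℂ} (hX0 : X ≠ 0) (hX : X.PosSemidef)
    (hAX : (A * X + X * Aᴴ).PosSemidef) :
    ∃ (μ : ℂ) (w : ι → ℂ), 0 ≤ μ.re ∧ X *ᵥ w ≠ 0 ∧ A *ᵥ (X *ᵥ w) = μ • X *ᵥ w := by
  obtain ⟨Y, hY⟩ := exists_mul_eq_mul_of_posSemidef hX hAX
  obtain ⟨μ, w, hw, heig⟩ := exists_eigenvector_of_mul_eq_mul hX0 hY
  refine ⟨μ, w, ?_, hw, heig⟩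
  have hpos : 0 < (star w ⬝ᵥ (X *ᵥ w)).re :=
    (hX.re_dotProduct_nonneg w).lt_of_ne fun h0 => hw <| (hX.dotProduct_mulVec_zero_iff w).1 <|
      Complex.ext h0.symm (hX.isHermitian.im_star_dotProduct_mulVec_self w)
  have hnonneg : 0 ≤ 2 * μ.re * (star w ⬝ᵥ (X *ᵥ w)).re := by
    rw [← re_star_dotProduct_add_conjTranspose_mulVec (M := A * X) hX.isHermitian
      (by rw [← mulVec_mulVec, heig]), conjTranspose_mul, hX.isHermitian.eq]
    exact hAX.re_dotProduct_nonneg w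
  nlinarith

end Lyapunov

section Alternative

variable {ι : Type*} [Fintype ι]

theorem trace_vecMulVec_mul (X : Matrix ι ι ℝ) (x y : ι → ℝ) :
    (vecMulVec x y * X).trace = y ⬝ᵥ (X *ᵥ x) := by
  rw [trace_mul_comm, mul_vecMulVec, trace_vecMulVec, dotProduct_comm]

theorem abs_apply_le_trace_of_posSemidef {X : Matrix ι ι ℝ} (hX : X.PosSemidef) (i j : ι) :
    |X i j| ≤ X.trace := by
  classical
  have hminor : 0 ≤ X i i * X j j - X i j * X j i := by
    exact det_fin_two (X.submatrix ![i, j] ![i, j]) ▸ (hX.submatrix ![i, j]).det_nonneg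
  have hsymm : X j i = X i j := by simpa using hX.isHermitian.apply i j
  have hdiag (k : ι) : X k k ≤ X.trace :=
    Finset.single_le_sum (f := X.diag) (fun k _ => hX.diag_nonneg) (Finset.mem_univ k)
  refine abs_le_of_sq_le_sq ?_ hX.trace_nonneg
  calc X i j ^ 2 ≤ X i i * X j j := by rw [hsymm] at hminor; linarith
    _ ≤ X.trace ^ 2 := by
      rw [sq]
      exact mul_le_mul (hdiag i) (hdiag j) hX.diag_nonneg hX.trace_nonneg

theorem isCompact_setOf_posSemidef_trace_eq (c : ℝ) :
    IsCompact {X : Matrix ι ι ℝ | X.PosSemidef ∧ X.trace = c} := by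
  have hbox : IsCompact (Set.univ.pi fun _ => Set.univ.pi fun _ => Set.Icc (-c) c :
      Set (Matrix ι ι ℝ)) := isCompact_univ_pi fun _ => isCompact_univ_pi fun _ => isCompact_Icc
  refine hbox.of_isClosed_subset ?_ fun X hX i _ j _ =>
    abs_le.1 (hX.2 ▸ abs_apply_le_trace_of_posSemidef hX.1 i j)
  simp only [posSemidef_iff_dotProduct_mulVec, IsHermitian, Set.ofPred_and, Set.ofPred_forall]
  refine ((isClosed_eq (by fun_prop) continuous_id).inter (isClosed_iInter fun x => ?_)).inter
    (isClosed_eq (by fun_prop) continuous_const)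
  exact isClosed_le continuous_const (by fun_prop)

theorem convex_setOf_posSemidef_trace_eq (c : ℝ) :
    Convex ℝ {X : Matrix ι ι ℝ | X.PosSemidef ∧ X.trace = c} := by
  rintro X ⟨hX, hXc⟩ Y ⟨hY, hYc⟩ a b ha hb hab
  refine ⟨(hX.smul ha).add (hY.smul hb), ?_⟩
  rw [trace_add, trace_smul, trace_smul, hXc, hYc, ← add_smul, hab, one_smul]

theorem forall_pos_of_forall_trace_mul_pos {T : Matrix ι ι ℝ}
    (hT : ∀ X : Matrix ι ι ℝ, X.PosSemidef → X.trace = 1 → 0 < (X * T).trace)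
    {x : ι → ℝ} (hx : x ≠ 0) : 0 < x ⬝ᵥ (T *ᵥ x) := by
  have hxx : 0 < x ⬝ᵥ x := by simpa using dotProduct_star_self_pos_iff.2 hx
  have h := hT ((x ⬝ᵥ x)⁻¹ • vecMulVec x x)
    (PosSemidef.smul (by simpa using posSemidef_vecMulVec_self_star x) (inv_nonneg.2 hxx.le))
    (by rw [trace_smul, trace_vecMulVec, smul_eq_mul, inv_mul_cancel₀ hxx.ne'])
  rw [smul_mul_assoc, trace_smul, trace_vecMulVec_mul, smul_eq_mul] at h
  exact pos_of_mul_pos_right h (inv_nonneg.2 hxx.le)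

theorem exists_mem_forall_pos_or_exists_posSemidef_trace_mul_eq_zero
    (V : Submodule ℝ (Matrix ι ι ℝ)) :
    (∃ T ∈ V, ∀ x ≠ 0, 0 < x ⬝ᵥ (T *ᵥ x)) ∨
      ∃ X : Matrix ι ι ℝ, X ≠ 0 ∧ X.PosSemidef ∧ ∀ T ∈ V, (X * T).trace = 0 := by
  let b := Module.finBasis ℝ V
  let φ : Matrix ι ι ℝ →ₗ[ℝ] Fin (Module.finrank ℝ V) → ℝ :=
    LinearMap.pi fun k => traceLinearMap ι ℝ ℝ ∘ₗ LinearMap.mulRight ℝ (b k : Matrix ι ι ℝ)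
  let D := {X : Matrix ι ι ℝ | X.PosSemidef ∧ X.trace = 1}
  by_cases h0 : 0 ∈ φ '' D
  · obtain ⟨X, ⟨hX, hXtr⟩, hφ⟩ := h0
    refine .inr ⟨X, fun h => by simp [h] at hXtr, hX, fun T hT => ?_⟩
    have hzero : traceLinearMap ι ℝ ℝ ∘ₗ LinearMap.mulLeft ℝ X ∘ₗ V.subtype = 0 :=
      b.ext fun k => congrFun hφ k
    exact LinearMap.congr_fun hzero ⟨T, hT⟩
  · have hclosed : IsClosed (φ '' D) :=
      ((isCompact_setOf_posSemidef_trace_eq 1).image φ.continuous_of_finiteDimensional).isClosed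
    obtain ⟨f, u, hu0, hu⟩ := geometric_hahn_banach_point_closed
      ((convex_setOf_posSemidef_trace_eq 1).linear_image φ) hclosed h0
    refine .inl ⟨∑ k, f (Pi.single k 1) • b k, V.sum_mem fun k _ => V.smul_mem _ (b k).2,
      fun x hx => forall_pos_of_forall_trace_mul_pos (fun X hX hXtr => ?_) hx⟩
    have hfφ : (X * ∑ k, f (Pi.single k 1) • (b k : Matrix ι ι ℝ)).trace = f (φ X) := by
      conv_rhs => rw [pi_eq_sum_univ' (φ X), map_sum]
      simp [φ, Matrix.mul_sum, trace_sum, mul_comm]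
    rw [hfφ]
    exact (f.map_zero ▸ hu0).trans (hu _ ⟨X, ⟨hX, hXtr⟩, rfl⟩)

end Alternative

section Detectability

variable {ι κ : Type*} [Fintype ι]

theorem posDef_add_transpose_of_forall_pos {T : Matrix ι ι ℝ}
    (hT : ∀ x ≠ 0, 0 < x ⬝ᵥ (T *ᵥ x)) : (T + Tᵀ).PosDef := by
  refine .of_dotProduct_mulVec_pos (isHermitian_add_transpose_self T) fun x hx => ?_
  have hTt : x ⬝ᵥ (Tᵀ *ᵥ x) = x ⬝ᵥ (T *ᵥ x) := by
    rw [mulVec_transpose, dotProduct_comm, ← dotProduct_mulVec]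
  rw [star_trivial, add_mulVec, dotProduct_add, hTt]
  exact add_pos (hT x hx) (hT x hx)

theorem forall_pos_of_forall_fromBlocks_pos {S T : Matrix ι ι ℝ}
    (h : ∀ z ≠ 0, 0 < z ⬝ᵥ (fromBlocks S 0 0 T *ᵥ z)) :
    (∀ x ≠ 0, 0 < x ⬝ᵥ (S *ᵥ x)) ∧ ∀ x ≠ 0, 0 < x ⬝ᵥ (T *ᵥ x) := by
  have hne (x y : ι → ℝ) (hxy : x ≠ 0 ∨ y ≠ 0) : 0 < x ⬝ᵥ (S *ᵥ x) + y ⬝ᵥ (T *ᵥ y) := by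
    have hz := h (Sum.elim x y) fun h0 => hxy.elim
      (fun hx => hx (congrArg (· ∘ Sum.inl) h0)) fun hy => hy (congrArg (· ∘ Sum.inr) h0)
    simpa [fromBlocks_mulVec, Function.comp_def, sumElim_dotProduct_sumElim] using hz
  exact ⟨fun x hx => by simpa using hne x 0 (.inl hx), fun y hy => by simpa using hne 0 y (.inr hy)⟩

theorem trace_fromBlocks_eq_add [Fintype κ] (S : Matrix ι ι ℝ) (T : Matrix ι κ ℝ)
    (T' : Matrix κ ι ℝ) (R : Matrix κ κ ℝ) :
    (fromBlocks S T T' R).trace = S.trace + R.trace := by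
  simp [trace]

/-- The linear matrix map `(P, G) ↦ diag (P, G C - (P A + Aᵀ P))`, whose positivity expresses that
`P` is a Lyapunov matrix for the output injection `P⁻¹ G`. -/
def lyapunovMap [Fintype κ] (A : Matrix ι ι ℝ) (C : Matrix κ ι ℝ) :
    Matrix ι ι ℝ × Matrix ι κ ℝ →ₗ[ℝ] Matrix (ι ⊕ ι) (ι ⊕ ι) ℝ where
  toFun q := fromBlocks q.1 0 0 (q.2 * C - (q.1 * A + Aᵀ * q.1))
  map_add' q q' := by
    rw [fromBlocks_add]
    simp only [Prod.fst_add, Prod.snd_add, Matrix.add_mul, Matrix.mul_add, add_zero,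
      fromBlocks_inj, true_and]
    abel
  map_smul' c q := by
    rw [fromBlocks_smul]
    simp [smul_sub]

theorem trace_mul_lyapunovMap [Fintype κ] (A : Matrix ι ι ℝ) (C : Matrix κ ι ℝ)
    (X : Matrix (ι ⊕ ι) (ι ⊕ ι) ℝ) (q : Matrix ι ι ℝ × Matrix ι κ ℝ) :
    (X * lyapunovMap A C q).trace =
      ((X.toBlocks₁₁ - (A * X.toBlocks₂₂ + X.toBlocks₂₂ * Aᵀ)) * q.1).trace +
        (C * X.toBlocks₂₂ * q.2).trace := by
  obtain ⟨P, G⟩ := q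
  have hA : (A * (X.toBlocks₂₂ * P)).trace = (X.toBlocks₂₂ * (P * A)).trace := by
    rw [trace_mul_comm, Matrix.mul_assoc]
  have hC : (C * (X.toBlocks₂₂ * G)).trace = (X.toBlocks₂₂ * (G * C)).trace := by
    rw [trace_mul_comm, Matrix.mul_assoc]
  conv_lhs => rw [← fromBlocks_toBlocks X]
  simp only [lyapunovMap, LinearMap.coe_mk, AddHom.coe_mk, fromBlocks_multiply,
    trace_fromBlocks_eq_add]
  simp only [Matrix.mul_zero, zero_add, add_zero, Matrix.mul_sub, Matrix.mul_add, Matrix.sub_mul,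
    Matrix.add_mul, trace_sub, trace_add, Matrix.mul_assoc, hA, hC]
  ring

theorem exists_posDef_or_exists_posSemidef [Fintype κ] (A : Matrix ι ι ℝ) (C : Matrix κ ι ℝ) :
    (∃ (P : Matrix ι ι ℝ) (G : Matrix ι κ ℝ), P.PosDef ∧
      (G * C + (G * C)ᵀ - (P * A + Aᵀ * P)).PosDef) ∨
    ∃ X : Matrix ι ι ℝ, X ≠ 0 ∧ X.PosSemidef ∧ (A * X + X * Aᵀ).PosSemidef ∧ C * X = 0 := by
  classical
  rcases exists_mem_forall_pos_or_exists_posSemidef_trace_mul_eq_zero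
    (LinearMap.range (lyapunovMap A C)) with ⟨_, ⟨⟨P, G⟩, rfl⟩, hpos⟩ | ⟨X, hX0, hX, htr⟩
  · obtain ⟨hP, hT⟩ := forall_pos_of_forall_fromBlocks_pos hpos
    refine .inl ⟨P + Pᵀ, G, posDef_add_transpose_of_forall_pos hP, ?_⟩
    convert posDef_add_transpose_of_forall_pos hT using 1
    simp only [transpose_sub, transpose_add, transpose_mul, transpose_transpose, Matrix.add_mul,
      Matrix.mul_add]
    abel
  · have h (q) := (trace_mul_lyapunovMap A C X q).symm.trans (htr _ ⟨q, rfl⟩)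
    have h₁₁ : X.toBlocks₁₁ = A * X.toBlocks₂₂ + X.toBlocks₂₂ * Aᵀ := by
      rw [← sub_eq_zero, ext_iff_trace_mul_right]
      intro P
      simpa using h (P, 0)
    have hC : C * X.toBlocks₂₂ = 0 := by
      rw [ext_iff_trace_mul_right]
      intro G
      simpa using h (0, G)
    refine .inr ⟨X.toBlocks₂₂, fun h₂₂ => hX0 ?_, hX.submatrix Sum.inr,
      h₁₁ ▸ hX.submatrix Sum.inl, hC⟩
    rw [← hX.trace_eq_zero_iff, ← fromBlocks_toBlocks X, trace_fromBlocks_eq_add, h₁₁, h₂₂]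
    simp

/-- Detectability of the pair `(A, C)` in Popov–Belevitch–Hautus form: no eigenvector of `A` for an
eigenvalue in the closed right half-plane is invisible in the output `C`. -/
def IsDetectable (A : Matrix ι ι ℝ) (C : Matrix κ ι ℝ) : Prop :=
  ∀ (s : ℂ) (v : ι → ℂ), 0 ≤ s.re → A.map Complex.ofReal *ᵥ v = s • v →
    C.map Complex.ofReal *ᵥ v = 0 → v = 0

theorem IsDetectable.eq_zero_of_posSemidef {A : Matrix ι ι ℝ} {C : Matrix κ ι ℝ}
    (h : IsDetectable A C) {X : Matrix ι ι ℝ} (hX : X.PosSemidef)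
    (hAX : (A * X + X * Aᵀ).PosSemidef) (hCX : C * X = 0) : X = 0 := by
  by_contra hX0
  have hAX' : (A.map Complex.ofReal * X.map Complex.ofReal +
      X.map Complex.ofReal * (A.map Complex.ofReal)ᴴ).PosSemidef := by
    rw [conjTranspose_map_ofReal, ← map_ofReal_mul, ← map_ofReal_mul,
      ← Matrix.map_add Complex.ofReal Complex.ofReal_add]
    exact posSemidef_map_ofReal hAX
  have hX0' : X.map Complex.ofReal ≠ 0 := fun h0 =>
    hX0 (Matrix.map_injective Complex.ofReal_injective (h0.trans (by ext; simp)))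
  obtain ⟨μ, w, hμ, hw, heig⟩ :=
    exists_eigenvector_of_posSemidef hX0' (posSemidef_map_ofReal hX) hAX'
  refine hw (h μ _ hμ heig ?_)
  rw [mulVec_mulVec, ← map_ofReal_mul, hCX, Matrix.map_zero _ Complex.ofReal_zero, zero_mulVec]

theorem IsDetectable.exists_isHurwitz_sub_mul [DecidableEq ι] [Fintype κ] {A : Matrix ι ι ℝ}
    {C : Matrix κ ι ℝ} (h : IsDetectable A C) : ∃ G : Matrix ι κ ℝ, IsHurwitz (A - G * C) := by
  rcases exists_posDef_or_exists_posSemidef A C with ⟨P, G, hP, hG⟩ | ⟨X, hX0, hX, hAX, hCX⟩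
  · have hPinv : P * (P⁻¹ * G) = G :=
      mul_nonsing_inv_cancel_left P G (P.isUnit_iff_isUnit_det.1 hP.isUnit)
    refine ⟨P⁻¹ * G, isHurwitz_of_lyapunov hP ?_⟩
    convert hG using 1
    have hPt : Pᵀ = P := by simpa [IsHermitian] using hP.isHermitian
    have hsymm : (P⁻¹ * G * C)ᵀ * P = (G * C)ᵀ := by
      nth_rw 2 [← hPt]
      rw [← transpose_mul, ← Matrix.mul_assoc, hPinv]
    rw [Matrix.mul_sub, transpose_sub, Matrix.sub_mul, hsymm, ← Matrix.mul_assoc, hPinv]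
    abel
  · exact absurd (h.eq_zero_of_posSemidef hX hAX hCX) hX0

theorem isDetectable_of_rank_eq {μ ρ τ : Type*} [Fintype μ] [Fintype ρ] [Fintype κ] [Fintype τ]
    [DecidableEq ι] {A : Matrix ι ι ℝ} {B : Matrix ι μ ℝ} {P : Matrix ι ρ ℝ} {C : Matrix κ ι ℝ}
    {U : Matrix μ τ ℝ} {W : Matrix ρ τ ℝ} {X X' : Matrix ι τ ℝ}
    (hX' : X' = A * X + B * U + P * W)
    (hrank : ∀ s : ℂ, 0 ≤ s.re →
      (fromRows (s • X.map Complex.ofReal - X'.map Complex.ofReal)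
        (fromRows (U.map Complex.ofReal) ((C * X).map Complex.ofReal))).rank =
      Fintype.card ι + Fintype.card μ + Fintype.card ρ) (J : Matrix ρ κ ℝ) :
    IsDetectable ((1 - P * J * C) * A) C := by
  intro s v hs hv hC
  have hXc : X'.map Complex.ofReal = A.map Complex.ofReal * X.map Complex.ofReal +
      B.map Complex.ofReal * U.map Complex.ofReal +
      P.map Complex.ofReal * W.map Complex.ofReal := by
    simp only [hX', Matrix.map_add _ Complex.ofReal_add, map_ofReal_mul]
  have hr := hrank s hs
  rw [map_ofReal_mul] at hr
  refine eq_zero_of_rank_eq_of_mulVec_eq hXc hr (w := -((J * C * A).map Complex.ofReal *ᵥ v)) ?_ hC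
  have hmat : (1 - P * J * C) * A = A - P * (J * C * A) := by
    simp only [Matrix.sub_mul, Matrix.one_mul, Matrix.mul_assoc]
  rw [← hv, hmat, Matrix.map_sub _ Complex.ofReal_sub, map_ofReal_mul P, sub_mulVec, mulVec_neg,
    mulVec_mulVec, ← sub_eq_add_neg]

end Detectability

section Laplacian

variable {ν : Type*} [Fintype ν] {L : Matrix ν ν ℝ}

theorem two_mul_dotProduct_mulVec_of_isSymm (hsym : L.IsSymm) (hone : L *ᵥ (fun _ => (1 : ℝ)) = 0)
    (u : ν → ℝ) : 2 * (u ⬝ᵥ (L *ᵥ u)) = ∑ i, ∑ j, -L i j * (u i - u j) ^ 2 := by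
  have hrow (i) : ∑ j, L i j = 0 := by simpa [mulVec, dotProduct] using congrFun hone i
  have hleft : ∑ i, ∑ j, L i j * u i ^ 2 = 0 := by simp [← Finset.sum_mul, hrow]
  have hright : ∑ i, ∑ j, L i j * u j ^ 2 = 0 := by
    rw [Finset.sum_comm]
    simpa only [hsym.apply] using hleft
  have hquad : u ⬝ᵥ (L *ᵥ u) = ∑ i, ∑ j, L i j * (u i * u j) := by
    simp only [mulVec, dotProduct, Finset.mul_sum]
    exact Finset.sum_congr rfl fun i _ => Finset.sum_congr rfl fun j _ => by ring
  calc 2 * (u ⬝ᵥ (L *ᵥ u))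
    _ = -(∑ i, ∑ j, L i j * u i ^ 2) + 2 * (∑ i, ∑ j, L i j * (u i * u j)) -
          (∑ i, ∑ j, L i j * u j ^ 2) := by
      rw [hleft, hright, hquad]
      ring
    _ = ∑ i, ∑ j, -L i j * (u i - u j) ^ 2 := by
      simp only [Finset.mul_sum, ← Finset.sum_neg_distrib, ← Finset.sum_add_distrib,
        ← Finset.sum_sub_distrib]
      exact Finset.sum_congr rfl fun i _ => Finset.sum_congr rfl fun j _ => by ring

omit [Fintype ν] in
theorem neg_mul_sub_sq_nonneg (hoff : ∀ i j, i ≠ j → L i j ≤ 0) (u : ν → ℝ) (i j : ν) :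
    0 ≤ -L i j * (u i - u j) ^ 2 := by
  rcases eq_or_ne i j with rfl | hij
  · simp
  · exact mul_nonneg (neg_nonneg.2 (hoff i j hij)) (sq_nonneg _)

theorem dotProduct_mulVec_nonneg_of_isSymm (hsym : L.IsSymm) (hoff : ∀ i j, i ≠ j → L i j ≤ 0)
    (hone : L *ᵥ (fun _ => (1 : ℝ)) = 0) (u : ν → ℝ) : 0 ≤ u ⬝ᵥ (L *ᵥ u) := by
  have hsum : 0 ≤ ∑ i, ∑ j, -L i j * (u i - u j) ^ 2 :=
    Finset.sum_nonneg fun i _ => Finset.sum_nonneg fun j _ => neg_mul_sub_sq_nonneg hoff u i j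
  linarith [two_mul_dotProduct_mulVec_of_isSymm hsym hone u]

theorem eq_of_dotProduct_mulVec_eq_zero (hsym : L.IsSymm) (hoff : ∀ i j, i ≠ j → L i j ≤ 0)
    (hone : L *ᵥ (fun _ => (1 : ℝ)) = 0) {u : ν → ℝ} (hu : u ⬝ᵥ (L *ᵥ u) = 0) {i j : ν}
    (hij : L i j ≠ 0) : u i = u j := by
  have hsum : ∑ i, ∑ j, -L i j * (u i - u j) ^ 2 = 0 := by
    rw [← two_mul_dotProduct_mulVec_of_isSymm hsym hone, hu, mul_zero]
  have hrow := (Fintype.sum_eq_zero_iff_of_nonneg fun i =>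
    Finset.sum_nonneg fun j _ => neg_mul_sub_sq_nonneg hoff u i j).1 hsum
  have hentry := (Fintype.sum_eq_zero_iff_of_nonneg fun j =>
    neg_mul_sub_sq_nonneg hoff u i j).1 (congrFun hrow i)
  have := (mul_eq_zero.1 (congrFun hentry j)).resolve_left (neg_ne_zero.2 hij)
  exact sub_eq_zero.1 (pow_eq_zero_iff two_ne_zero |>.1 this)

theorem MatIrreducible.eq_of_forall_ne_zero_imp_eq {k : ℕ} {L : Matrix (Fin k) (Fin k) ℝ}
    (hirr : MatIrreducible L) {α : Type*} {u : Fin k → α} (hu : ∀ i j, L i j ≠ 0 → u i = u j)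
    (i j : Fin k) : u i = u j := by
  classical
  by_contra hij
  obtain ⟨a, ha, b, hb, hab⟩ := hirr {a | u a = u j} ⟨j, by simp⟩ fun huniv =>
    hij (Finset.mem_filter.1 (huniv.symm.subset (Finset.mem_univ i))).2
  simp only [Finset.mem_filter, Finset.mem_univ, true_and] at ha hb
  exact hb ((hu a b hab).symm.trans ha)

theorem dotProduct_submatrix_mulVec {m : Type*} [Fintype m] (M : Matrix ν ν ℝ) {e : m → ν}
    (he : Function.Injective e) (x : m → ℝ) :
    x ⬝ᵥ (M.submatrix e e *ᵥ x) =
      Function.extend e x 0 ⬝ᵥ (M *ᵥ Function.extend e x 0) := by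
  have hsum (f : ν → ℝ) : ∑ a, x a * f (e a) = ∑ i, Function.extend e x 0 i * f i :=
    Fintype.sum_of_injective e he _ _ (fun i hi => by
      rw [Function.extend_apply' _ _ _ (by simpa using hi), Pi.zero_apply, zero_mul])
      fun a => by rw [he.extend_apply]
  simp only [dotProduct, mulVec, submatrix_apply, ← hsum, mul_comm (M _ _)]

theorem posDef_submatrix_ne {k : ℕ} {L : Matrix (Fin k) (Fin k) ℝ} (hsym : L.IsSymm)
    (hoff : ∀ i j, i ≠ j → L i j ≤ 0) (hone : L *ᵥ (fun _ => (1 : ℝ)) = 0)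
    (hirr : MatIrreducible L) (i₀ : Fin k) :
    (L.submatrix ((↑) : {i // i ≠ i₀} → Fin k) (↑)).PosDef := by
  have hherm : L.IsHermitian := by simpa [IsHermitian] using hsym.eq
  refine .of_dotProduct_mulVec_pos (hherm.submatrix _) fun x hx => ?_
  rw [star_trivial, dotProduct_submatrix_mulVec L Subtype.val_injective]
  refine (dotProduct_mulVec_nonneg_of_isSymm hsym hoff hone _).lt_of_ne fun h0 => hx ?_
  funext i
  have hconst := hirr.eq_of_forall_ne_zero_imp_eq
    (fun _ _ => eq_of_dotProduct_mulVec_eq_zero hsym hoff hone h0.symm) i i₀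
  rwa [Subtype.val_injective.extend_apply, Function.extend_apply' _ _ _ (by simp)] at hconst

end Laplacian

section Pinning

theorem exists_posDef_smul_sub {ι : Type*} [Finite ι] {R S : Matrix ι ι ℝ} (hR : R.PosDef)
    (hS : S.IsHermitian) : ∃ c : ℝ, (c • R - S).PosDef := by
  have := Fintype.ofFinite ι
  have hcont (T : Matrix ι ι ℝ) : Continuous fun x : ι → ℝ => x ⬝ᵥ (T *ᵥ x) := by fun_prop
  have hRpos {x : ι → ℝ} (hx : x ≠ 0) : 0 < x ⬝ᵥ (R *ᵥ x) := by
    simpa using hR.dotProduct_mulVec_pos hx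
  obtain ⟨c, hc⟩ := (isCompact_sphere (0 : ι → ℝ) 1).bddAbove_image
    (f := fun x => (x ⬝ᵥ (S *ᵥ x)) / (x ⬝ᵥ (R *ᵥ x))) ((hcont S).continuousOn.div
      (hcont R).continuousOn fun x hx => (hRpos (ne_zero_of_mem_unit_sphere ⟨x, hx⟩)).ne')
  refine ⟨c + 1, .of_dotProduct_mulVec_pos
    ((hR.isHermitian.smul (IsSelfAdjoint.all _)).sub hS) fun x hx => ?_⟩
  have hinv : ‖x‖⁻¹ ≠ 0 := inv_ne_zero (norm_ne_zero_iff.2 hx)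
  have hquot := hc ⟨‖x‖⁻¹ • x, by simp [norm_smul, norm_ne_zero_iff.2 hx], rfl⟩
  simp only [mulVec_smul, dotProduct_smul, smul_dotProduct, smul_eq_mul] at hquot
  rw [mul_div_mul_left _ _ hinv, mul_div_mul_left _ _ hinv, div_le_iff₀ (hRpos hx)] at hquot
  rw [star_trivial, sub_mulVec, smul_mulVec, dotProduct_sub, dotProduct_smul, smul_eq_mul]
  linarith [hRpos hx]

variable {ι κ : Type*} [Fintype ι] [DecidableEq ι] [Fintype κ] [DecidableEq κ]

theorem isHurwitz_iff_det {A : Matrix ι ι ℝ} :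
    IsHurwitz A ↔ ∀ z : ℂ, (z • 1 - A.map Complex.ofReal).det = 0 → z.re < 0 := by
  simp only [IsHurwitz, spectrum.mem_iff, Algebra.algebraMap_eq_smul_one, isUnit_iff_isUnit_det,
    isUnit_iff_ne_zero, not_not]

theorem IsHurwitz.submatrix {A : Matrix ι ι ℝ} (hA : IsHurwitz A) (e : κ ≃ ι) :
    IsHurwitz (A.submatrix e e) := by
  rw [isHurwitz_iff_det] at hA ⊢
  intro z hz
  have hsub : z • 1 - (A.submatrix e e).map Complex.ofReal =
      (z • 1 - A.map Complex.ofReal).submatrix e e := by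
    ext i j
    simp [one_apply]
  rw [hsub, det_submatrix_equiv_self] at hz
  exact hA z hz

theorem isHurwitz_of_toSquareBlockProp {T : Matrix ι ι ℝ} (p : ι → Prop) [DecidablePred p]
    (hT : ∀ i, p i → ∀ j, ¬p j → T i j = 0) (hp : IsHurwitz (T.toSquareBlockProp p))
    (hnp : IsHurwitz (T.toSquareBlockProp fun i => ¬p i)) : IsHurwitz T := by
  rw [isHurwitz_iff_det] at hp hnp ⊢
  intro z hz
  have hblock (q : ι → Prop) : (z • 1 - T.map Complex.ofReal).toSquareBlockProp q =
      z • 1 - (T.toSquareBlockProp q).map Complex.ofReal := by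
    ext i j
    simp [toSquareBlockProp, one_apply, Subtype.ext_iff]
  rw [twoBlockTriangular_det' _ p, hblock, hblock, mul_eq_zero] at hz
  · exact hz.elim (hp z) (hnp z)
  · intro i hi j hj
    have hij : i ≠ j := fun h => hj (h ▸ hi)
    simp [hT i hi j hj, hij]

theorem exists_isHurwitz_sub_smul (S : Matrix ι ι ℝ) {R : Matrix ι ι ℝ} (hR : R.PosDef) :
    ∃ c : ℝ, IsHurwitz (S - c • R) := by
  obtain ⟨c, hc⟩ := exists_posDef_smul_sub hR (isHermitian_add_transpose_self S)
  refine ⟨c / 2, isHurwitz_of_lyapunov .one ?_⟩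
  have hRt : Rᵀ = R := by simpa [IsHermitian] using hR.isHermitian
  convert hc using 1
  rw [Matrix.one_mul, Matrix.mul_one, transpose_sub, transpose_smul, hRt,
    conjTranspose_eq_transpose_of_trivial]
  module

theorem bdiag_sub_mul_kronecker_apply {k n : ℕ} (E : Fin k → Matrix (Fin n) (Fin n) ℝ)
    (c : Fin k → ℝ) (L : Matrix (Fin k) (Fin k) ℝ) (q q' : Fin k × Fin n) :
    (bdiag E - bdiag (fun i => c i • 1) * (L ⊗ₖ 1) : Matrix _ _ ℝ) q q' =
      bdiag E q q' - c q.1 * (L ⊗ₖ (1 : Matrix (Fin n) (Fin n) ℝ)) q q' := by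
  simp [mul_apply, bdiag, Fintype.sum_prod_type, one_apply]

theorem exists_isHurwitz_bdiag_sub {k n : ℕ} {L : Matrix (Fin k) (Fin k) ℝ}
    (hsym : L.IsSymm) (hoff : ∀ i j, i ≠ j → L i j ≤ 0)
    (hone : L *ᵥ (fun _ => (1 : ℝ)) = 0) (hirr : MatIrreducible L)
    (E : Fin k → Matrix (Fin n) (Fin n) ℝ) (i₀ : Fin k) (hE : IsHurwitz (E i₀)) :
    ∃ K : Fin k → Matrix (Fin n) (Fin n) ℝ,
      IsHurwitz (bdiag E - bdiag K * (L ⊗ₖ (1 : Matrix (Fin n) (Fin n) ℝ))) := by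
  let pinned (q : Fin k × Fin n) : Prop := q.1 = i₀
  let regroup (q : {q // ¬pinned q}) : {i // i ≠ i₀} × Fin n := (⟨q.1.1, q.2⟩, q.1.2)
  have hregroup : Function.Injective regroup := fun q q' h => by
    simp only [regroup, Prod.mk.injEq, Subtype.mk.injEq] at h
    exact Subtype.ext (Prod.ext h.1 h.2)
  obtain ⟨c, hc⟩ := exists_isHurwitz_sub_smul ((bdiag E).toSquareBlockProp fun q => ¬pinned q)
    (((posDef_submatrix_ne hsym hoff hone hirr i₀).kronecker
      (PosDef.one (n := Fin n))).submatrix hregroup)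
  let gain (i : Fin k) : ℝ := if i = i₀ then 0 else c
  refine ⟨fun i => gain i • 1, isHurwitz_of_toSquareBlockProp pinned (fun q hq q' hq' => ?_) ?_ ?_⟩
  · have hne : q.1 ≠ q'.1 := fun h => hq' (h.symm.trans hq)
    rw [bdiag_sub_mul_kronecker_apply, bdiag, if_neg hne, show gain q.1 = 0 from if_pos hq,
      zero_mul, sub_zero]
  · let e : {q // pinned q} ≃ Fin n :=
      { toFun q := q.1.2
        invFun a := ⟨(i₀, a), rfl⟩
        left_inv q := Subtype.ext (Prod.ext q.2.symm rfl)
        right_inv _ := rfl }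
    convert hE.submatrix e using 1
    ext ⟨q, hq⟩ ⟨q', hq'⟩
    change q.1 = i₀ at hq
    change q'.1 = i₀ at hq'
    simp only [toSquareBlockProp_def, of_apply, bdiag_sub_mul_kronecker_apply]
    simp [gain, bdiag, hq, hq', e]
  · convert hc using 1
    ext ⟨q, hq⟩ ⟨q', hq'⟩
    change q.1 ≠ i₀ at hq
    simp only [toSquareBlockProp_def, of_apply, bdiag_sub_mul_kronecker_apply]
    simp [gain, hq, regroup]

end Pinning

theorem stmt17_general {k n N : ℕ} {m r p : Fin k → ℕ}
    (A : Matrix (Fin n) (Fin n) ℝ)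
    (Bm : ∀ i, Matrix (Fin n) (Fin (m i)) ℝ)
    (Bp : ∀ i, Matrix (Fin n) (Fin (r i)) ℝ)
    (C : ∀ i, Matrix (Fin (p i)) (Fin n) ℝ)
    (U : ∀ i, Matrix (Fin (m i)) (Fin N) ℝ)
    (W : ∀ i, Matrix (Fin (r i)) (Fin N) ℝ)
    (X : Fin k → Matrix (Fin n) (Fin N) ℝ)
    (hrank : ∀ i, (fromRows (U i) (fromRows (W i) (X i))).rank = m i + r i + n)
    (Xdot : Fin k → Matrix (Fin n) (Fin N) ℝ)
    (hXdot : ∀ i, Xdot i = A * X i + Bm i * U i + Bp i * W i)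
    (Y : ∀ i, Matrix (Fin (p i)) (Fin N) ℝ) (hY : ∀ i, Y i = C i * X i)
    (Ydot : ∀ i, Matrix (Fin (p i)) (Fin N) ℝ) (hYdot : ∀ i, Ydot i = C i * Xdot i)
    (L : Matrix (Fin k) (Fin k) ℝ)
    (hsym : L.IsSymm)
    (hoff : ∀ i j, i ≠ j → L i j ≤ 0)
    (hone : L *ᵥ (fun _ => (1 : ℝ)) = 0)
    (hirr : MatIrreducible L)
    (ha : ∀ i, (fromRows (U i) (fromRows (Ydot i) (X i))).rank =
      (fromRows (U i) (fromRows (X i) (Xdot i))).rank)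
    (i₀ : Fin k)
    (hb : ∀ s : ℂ, 0 ≤ s.re →
      (fromRows (s • (X i₀).map Complex.ofReal - (Xdot i₀).map Complex.ofReal)
        (fromRows ((U i₀).map Complex.ofReal) ((Y i₀).map Complex.ofReal))).rank =
      n + m i₀ + r i₀) :
    ∃ (E K : Fin k → Matrix (Fin n) (Fin n) ℝ)
      (F : ∀ i, Matrix (Fin n) (Fin (m i)) ℝ)
      (Lm : ∀ i, Matrix (Fin n) (Fin (p i)) ℝ)
      (H : ∀ i, Matrix (Fin n) (Fin (p i)) ℝ),
      (∀ i, F i = (1 - H i * C i) * Bm i ∧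
        (1 - H i * C i) * Bp i = 0 ∧
        E i = (1 - H i * C i) * A - (Lm i - E i * H i) * C i) ∧
      IsHurwitz (bdiag E - bdiag K * (L ⊗ₖ (1 : Matrix (Fin n) (Fin n) ℝ))) := by
  obtain rfl : Y = fun i => C i * X i := funext hY
  obtain rfl : Ydot = fun i => C i * Xdot i := funext hYdot
  choose J hJ using fun i => exists_mul_mul_mul_eq_of_rank_eq (hXdot i)
    (by simpa only [Fintype.card_fin] using hrank i) (ha i)
  obtain ⟨G, hG⟩ := (isDetectable_of_rank_eq (hXdot i₀)
    (by simpa only [Fintype.card_fin] using hb) (J i₀)).exists_isHurwitz_sub_mul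
  let H (i : Fin k) := Bp i * J i
  let Γ : ∀ i, Matrix (Fin n) (Fin (p i)) ℝ := Function.update (fun _ => 0) i₀ G
  let E (i : Fin k) := (1 - H i * C i) * A - Γ i * C i
  obtain ⟨K, hK⟩ := exists_isHurwitz_bdiag_sub hsym hoff hone hirr E i₀
    (by simpa only [E, Γ, Function.update_self] using hG)
  refine ⟨E, K, fun i => (1 - H i * C i) * Bm i, fun i => Γ i + E i * H i, H,
    fun i => ⟨rfl, ?_, ?_⟩, hK⟩
  · rw [Matrix.sub_mul, Matrix.one_mul, Matrix.mul_assoc, hJ, sub_self]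
  · rw [add_sub_cancel_right]

/-- Existence of a distributed unknown-input observer, with conditions verifiable from
data alone. (Nodes are indexed by `Fin (M+2)`, node 1 being index `0`.) -/
theorem stmt17 {M n N : ℕ} {m r p : Fin (M + 2) → ℕ}
    -- system and data, for each node
    (A : Matrix (Fin n) (Fin n) ℝ)
    (Bm : ∀ i, Matrix (Fin n) (Fin (m i)) ℝ)
    (Bp : ∀ i, Matrix (Fin n) (Fin (r i)) ℝ)
    (hBp : ∀ i, (Bp i).rank = r i)
    (C : ∀ i, Matrix (Fin (p i)) (Fin n) ℝ)
    (U : ∀ i, Matrix (Fin (m i)) (Fin N) ℝ)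
    (W : ∀ i, Matrix (Fin (r i)) (Fin N) ℝ)
    (X : ∀ i, Matrix (Fin n) (Fin N) ℝ)
    (hrank : ∀ i, (Matrix.fromRows (U i) (Matrix.fromRows (W i) (X i))).rank =
      m i + r i + n)
    (Xdot : ∀ i, Matrix (Fin n) (Fin N) ℝ)
    (hXdot : ∀ i, Xdot i = A * X i + Bm i * U i + Bp i * W i)
    (Y : ∀ i, Matrix (Fin (p i)) (Fin N) ℝ) (hY : ∀ i, Y i = C i * X i)
    (Ydot : ∀ i, Matrix (Fin (p i)) (Fin N) ℝ) (hYdot : ∀ i, Ydot i = C i * Xdot i)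
    -- communication graph Laplacian
    (L : Matrix (Fin (M + 2)) (Fin (M + 2)) ℝ)
    (hsym : L.IsSymm)
    (hoff : ∀ i j, i ≠ j → L i j ≤ 0)
    (hone : L *ᵥ (fun _ => (1 : ℝ)) = 0)
    (hirr : MatIrreducible L)
    -- (a) data-driven solvability condition at each node
    (ha : ∀ i, (Matrix.fromRows (U i) (Matrix.fromRows (Ydot i) (X i))).rank =
      (Matrix.fromRows (U i) (Matrix.fromRows (X i) (Xdot i))).rank)
    -- (b) data-driven detectability condition at node 1 (index 0)
    (hb : ∀ s : ℂ, 0 ≤ s.re →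
      (Matrix.fromRows (s • (X 0).map Complex.ofReal - (Xdot 0).map Complex.ofReal)
        (Matrix.fromRows ((U 0).map Complex.ofReal)
          ((Y 0).map Complex.ofReal))).rank = n + m 0 + r 0) :
    ∃ (E K : Fin (M + 2) → Matrix (Fin n) (Fin n) ℝ)
      (F : ∀ i, Matrix (Fin n) (Fin (m i)) ℝ)
      (Lm : ∀ i, Matrix (Fin n) (Fin (p i)) ℝ)
      (H : ∀ i, Matrix (Fin n) (Fin (p i)) ℝ),
      (∀ i, F i = (1 - H i * C i) * Bm i ∧
        (1 - H i * C i) * Bp i = 0 ∧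
        E i = (1 - H i * C i) * A - (Lm i - E i * H i) * C i) ∧
      IsHurwitz (bdiag E - bdiag K * (L ⊗ₖ (1 : Matrix (Fin n) (Fin n) ℝ))) :=
  stmt17_general A Bm Bp C U W X hrank Xdot hXdot Y hY Ydot hYdot L hsym hoff hone hirr ha 0 hb
end
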